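/- arXiv:1112.5134 — 2 statements merged into one kernel-verified Lean document; each statement's English description precedes it below -/
import Mathlib

section
/- Let G be a connected graph with a cut vertex v and let G = H₁ ∨ H₂ be a corresponding decomposition. Then the map Div(H₁) ⊕ Div(H₂) → Div(G), (D₁, D₂) ↦ D₁ + D₂, is a surjective group homomorphism whose kernel is the infinite cyclic group generated by (v, −v); it restricts to an isomorphism Prin(H₁) ⊕ Prin(H₂) ≅ Prin(G), and it induces an exact sequence 0 → ℤ → Jac(H₁) ⊕ Jac(H₂) → Jac(G) → 0. -/
/-- A finite multigraph: vertices `V`, edges `E`, each edge has an (arbitrarily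
ordered) pair of endpoints.  Loops are edges whose two endpoints coincide. -/
structure Multigraph where
  V : Type
  E : Type
  [decV : DecidableEq V]
  [fintV : Fintype V]
  [decE : DecidableEq E]
  [fintE : Fintype E]
  ends : E → V × V

attribute [instance] Multigraph.decV Multigraph.fintV Multigraph.decE Multigraph.fintE

namespace Multigraph

variable (G : Multigraph)

/-- Two vertices are adjacent if some edge joins them. -/
def Adj (v w : G.V) : Prop := ∃ e : G.E, G.ends e = (v, w) ∨ G.ends e = (w, v)

/-- A multigraph is connected if it is nonempty and any two vertices are joined by a walk. -/
def Connected : Prop := Nonempty G.V ∧ ∀ v w : G.V, Relation.ReflTransGen G.Adj v w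

/-- The number of edges joining `v` and `w`. -/
def numEdges (v w : G.V) : ℕ :=
  (Finset.univ.filter fun e : G.E => G.ends e = (v, w) ∨ G.ends e = (w, v)).card

/-- The number of loops based at `v`. -/
def numLoops (v : G.V) : ℕ :=
  (Finset.univ.filter fun e : G.E => G.ends e = (v, v)).card

/-- The valency of `v` (loops count twice). -/
def valency (v : G.V) : ℕ :=
  ∑ e : G.E, ((if (G.ends e).1 = v then 1 else 0) + (if (G.ends e).2 = v then 1 else 0))

/-- The intersection product on vertices: `(v·w)` is the number of edges joining `v` and
`w` when `v ≠ w`, and `(v·v) = -val(v) + 2 loop(v)`. -/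
def inter (v w : G.V) : ℤ :=
  if v = w then -(G.valency v : ℤ) + 2 * (G.numLoops v : ℤ) else (G.numEdges v w : ℤ)

/-- The principal divisor `T_v = Σ_w (v·w) w`. -/
def T (v : G.V) : G.V → ℤ := fun w => G.inter v w

/-- The group of principal divisors, generated by the `T_v`. -/
def Prin : AddSubgroup (G.V → ℤ) := AddSubgroup.closure (Set.range G.T)

/-- The Jacobian group `Div(G)/Prin(G)`. -/
abbrev Jac := (G.V → ℤ) ⧸ G.Prin

/-- A divisor is effective if all its coefficients are nonnegative. -/
def Effective {α : Type} (D : α → ℤ) : Prop := ∀ v, 0 ≤ D v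

/-- The degree of a divisor. -/
def degree {α : Type} [Fintype α] (D : α → ℤ) : ℤ := ∑ v, D v

/-- The Baker–Norine rank of a divisor: `-1` if no effective divisor is linearly
equivalent to `D`, and otherwise the largest `k ≥ 0` such that for every effective
divisor `E` of degree `k` some effective divisor is linearly equivalent to `D - E`. -/
noncomputable def rank (D : G.V → ℤ) : ℤ :=
  sSup {r : ℤ | r = -1 ∨ (0 ≤ r ∧ ∀ E : G.V → ℤ, Effective E → degree E = r →
      ∃ F : G.V → ℤ, Effective F ∧ D - E - F ∈ G.Prin)}

/-- An edge is a loop if its two endpoints coincide. -/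
def IsLoop (e : G.E) : Prop := (G.ends e).1 = (G.ends e).2

/-- The refinement of `G` obtained by inserting `n e` new vertices in the interior of
each edge `e` (subdividing `e` into `n e + 1` edges). -/
def subdivide (n : G.E → ℕ) : Multigraph where
  V := G.V ⊕ (Σ e : G.E, Fin (n e))
  E := Σ e : G.E, Fin (n e + 1)
  ends := fun x =>
    (if h : (x.2 : ℕ) = 0 then Sum.inl (G.ends x.1).1
        else Sum.inr ⟨x.1, ⟨(x.2 : ℕ) - 1, by have := x.2.isLt; omega⟩⟩,
     if h : (x.2 : ℕ) = n x.1 then Sum.inl (G.ends x.1).2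
        else Sum.inr ⟨x.1, ⟨(x.2 : ℕ), by have := x.2.isLt; omega⟩⟩)

/-- The natural map `σ* : Div(G) → Div(G̃)` to a refinement, extending a divisor by
zero on the new vertices. -/
def subdivMap (n : G.E → ℕ) (D : G.V → ℤ) : (G.subdivide n).V → ℤ := Sum.elim D 0

/-- `Ĝ`: the loopless refinement obtained by inserting one new vertex in the interior of
every loop-edge. -/
def hat : Multigraph := G.subdivide fun e => if (G.ends e).1 = (G.ends e).2 then 1 else 0

/-- The rank `r#_G(D) := r_{Ĝ}(σ* D)`. -/
noncomputable def rankSharp (D : G.V → ℤ) : ℤ :=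
  G.hat.rank (G.subdivMap (fun e => if (G.ends e).1 = (G.ends e).2 then 1 else 0) D)

/-- A multigraph is loopless if no edge is a loop. -/
def Loopless : Prop := ∀ e : G.E, (G.ends e).1 ≠ (G.ends e).2

/-- The genus (first Betti number) `g = |E| - |V| + 1` of a connected graph. -/
def genus : ℤ := (Fintype.card G.E : ℤ) - (Fintype.card G.V : ℤ) + 1

/-- The canonical divisor `K#_G = Σ_v (val(v) - 2) v`. -/
def canonical : G.V → ℤ := fun v => (G.valency v : ℤ) - 2

/-- The loopless graph obtained from `G` by removing all loop-edges. -/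
def removeLoops : Multigraph where
  V := G.V
  E := {e : G.E // (G.ends e).1 ≠ (G.ends e).2}
  ends := fun e => G.ends e.1

/-- The virtual graph `G^ω` of a weighted graph `(G, ω)`: attach `ω v` loops at each
vertex `v`. -/
def virt (w : G.V → ℕ) : Multigraph where
  V := G.V
  E := G.E ⊕ (Σ v : G.V, Fin (w v))
  ends := Sum.elim G.ends fun p => (p.1, p.1)

/-- The rank of a divisor on the weighted graph `(G, ω)`: `r_{(G,ω)}(D) := r#_{G^ω}(D)`. -/
noncomputable def rankW (w : G.V → ℕ) (D : G.V → ℤ) : ℤ := (G.virt w).rankSharp D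

/-- The canonical divisor of the weighted graph `(G, ω)`. -/
def canonicalW (w : G.V → ℕ) : G.V → ℤ := fun v => (G.valency v : ℤ) + 2 * (w v : ℤ) - 2

/-- The genus of the weighted graph `(G, ω)`: `b₁(G) + Σ_v ω(v)`. -/
def genusW (w : G.V → ℕ) : ℤ := G.genus + ∑ v, (w v : ℤ)

/-- The rose `R_g`: one vertex and `g` loop-edges. -/
def rose (g : ℕ) : Multigraph where
  V := Unit
  E := Fin g
  ends := fun _ => ((), ())

/-- The subgraph of `G` determined by a set of vertices and a set of edges with
endpoints among them. -/
def subgraph (Vs : Finset G.V) (Es : Finset G.E)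
    (h : ∀ e ∈ Es, (G.ends e).1 ∈ Vs ∧ (G.ends e).2 ∈ Vs) : Multigraph where
  V := {x : G.V // x ∈ Vs}
  E := {e : G.E // e ∈ Es}
  ends := fun e => (⟨(G.ends e.1).1, (h e.1 e.2).1⟩, ⟨(G.ends e.1).2, (h e.1 e.2).2⟩)

/-- Extension of a divisor on a subgraph by zero: `ι_* : Div(H) → Div(G)`. -/
def iota (Vs : Finset G.V) (D : {x : G.V // x ∈ Vs} → ℤ) : G.V → ℤ :=
  fun x => if h : x ∈ Vs then D ⟨x, h⟩ else 0

end Multigraph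

namespace Multigraph

/-- A decomposition `G = H₁ ∨ H₂` of `G` associated to a cut vertex `v`:  `H₁`, `H₂` are
connected subgraphs with `V(H₁) ∩ V(H₂) = {v}`, `E(H₁) ∩ E(H₂) = ∅`, covering `G`. -/
structure Wedge (G : Multigraph) where
  v : G.V
  V1 : Finset G.V
  V2 : Finset G.V
  hv1 : v ∈ V1
  hv2 : v ∈ V2
  E1 : Finset G.E
  E2 : Finset G.E
  cover_V : V1 ∪ V2 = Finset.univ
  inter_V : V1 ∩ V2 = {v}
  cover_E : E1 ∪ E2 = Finset.univ
  disj_E : E1 ∩ E2 = ∅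
  ends1 : ∀ e ∈ E1, (G.ends e).1 ∈ V1 ∧ (G.ends e).2 ∈ V1
  ends2 : ∀ e ∈ E2, (G.ends e).1 ∈ V2 ∧ (G.ends e).2 ∈ V2
  conn1 : (G.subgraph V1 E1 ends1).Connected
  conn2 : (G.subgraph V2 E2 ends2).Connected

/-- The first subgraph `H₁` of a wedge decomposition. -/
def Wedge.H1 {G : Multigraph} (W : G.Wedge) : Multigraph := G.subgraph W.V1 W.E1 W.ends1

/-- The second subgraph `H₂` of a wedge decomposition. -/
def Wedge.H2 {G : Multigraph} (W : G.Wedge) : Multigraph := G.subgraph W.V2 W.E2 W.ends2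

variable (G : Multigraph)

/-- The divisor `div(f)` of an integer-valued function `f` on the vertices
(loops contribute zero). -/
def divOf (f : G.V → ℤ) : G.V → ℤ := fun v =>
  ∑ e : G.E, ((if (G.ends e).1 = v then f v - f (G.ends e).2 else 0)
            + (if (G.ends e).2 = v then f v - f (G.ends e).1 else 0))

/-- An isomorphism of multigraphs (edges may be matched with either orientation). -/
structure Iso (G H : Multigraph) where
  vEquiv : G.V ≃ H.V
  eEquiv : G.E ≃ H.E
  compat : ∀ e : G.E,
    H.ends (eEquiv e) = (vEquiv (G.ends e).1, vEquiv (G.ends e).2) ∨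
    H.ends (eEquiv e) = (vEquiv (G.ends e).2, vEquiv (G.ends e).1)

end Multigraph

/-!
With `∂e = [a] - [b]` the boundary of an edge `e = ab`, the divisor of a function is
`div f = ∑ₑ (f a - f b) ∂e`, and `T_u = -div(δ_u)`, so `Prin(G)` is the image of `div`. Splitting
the sum over `E(H₁) ⊔ E(H₂)` writes `div f` as the sum of the divisors of `f|H₁` and `f|H₂`.
Conversely, `div` kills constants, so functions on `H₁` and `H₂` can be normalized to vanish at `v`,
and then they glue to a function on `G`; hence `Prin(H₁) ⊕ Prin(H₂)` maps onto `Prin(G)`.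

A relation `D₁ + D₂ = 0` forces `(D₁, D₂)` to be a multiple of `(v, -v)`. Since principal divisors
have degree `0`, no nonzero multiple of `v` is principal, which gives injectivity on
`Prin(H₁) ⊕ Prin(H₂)` and at the left end of the sequence of Jacobians; the rest of the exactness is
a diagram chase.
-/

section ExactSequence

theorem range_eq_zmultiples_apply_one {A : Type*} [AddGroup A] (α : ℤ →+ A) :
    α.range = AddSubgroup.zmultiples (α 1) := by
  rw [AddMonoidHom.range_eq_map, ← Int.zmultiples_one, AddMonoidHom.map_zmultiples]

section CommutativeSquare

variable {A A' B B' : Type*} [AddGroup A] [AddGroup A'] [AddGroup B] [AddGroup B']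
  {f : A →+ B} {q : A →+ A'} {r : B →+ B'} {ψ : A' →+ B'}

theorem ker_eq_map_ker_of_comp_eq (hq : Function.Surjective q) (hψ : ψ.comp q = r.comp f)
    (hker : r.ker ≤ q.ker.map f) : ψ.ker = f.ker.map q := by
  apply le_antisymm
  · intro a' ha'
    obtain ⟨a, rfl⟩ := hq a'
    have hra : r (f a) = 0 := (DFunLike.congr_fun hψ a).symm.trans ha'
    obtain ⟨k, hk, hka⟩ := hker hra
    refine ⟨a - k, ?_, ?_⟩
    · simp only [SetLike.mem_coe, AddMonoidHom.mem_ker, map_sub, hka, sub_self]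
    · rw [map_sub, AddMonoidHom.mem_ker.1 hk, sub_zero]
  · rintro _ ⟨a, ha, rfl⟩
    have hψa : ψ (q a) = r (f a) := DFunLike.congr_fun hψ a
    rw [AddMonoidHom.mem_ker, hψa, AddMonoidHom.mem_ker.1 ha, map_zero]

end CommutativeSquare

variable {A₁ A₂ B : Type*} [AddCommGroup A₁] [AddCommGroup A₂] [AddCommGroup B]
  {P₁ : AddSubgroup A₁} {P₂ : AddSubgroup A₂} {Q : AddSubgroup B} {f : A₁ × A₂ →+ B}
  {ψ : (A₁ ⧸ P₁) × (A₂ ⧸ P₂) →+ B ⧸ Q}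

theorem surjective_of_prod_quotient (hψ : ∀ (a₁ : A₁) (a₂ : A₂), ψ (a₁, a₂) = f (a₁, a₂))
    (hf : Function.Surjective f) : Function.Surjective ψ := by
  intro y
  obtain ⟨b, rfl⟩ := QuotientAddGroup.mk_surjective y
  obtain ⟨⟨a₁, a₂⟩, rfl⟩ := hf b
  exact ⟨(a₁, a₂), hψ a₁ a₂⟩

theorem ker_eq_zmultiples_of_prod_quotient (hψ : ∀ (a₁ : A₁) (a₂ : A₂), ψ (a₁, a₂) = f (a₁, a₂))
    (hQ : Q ≤ (P₁.prod P₂).map f) {a₁ : A₁} {a₂ : A₂}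
    (hf : f.ker = AddSubgroup.zmultiples (a₁, a₂)) :
    ψ.ker = AddSubgroup.zmultiples ((a₁ : A₁ ⧸ P₁), (a₂ : A₂ ⧸ P₂)) := by
  let q := (QuotientAddGroup.mk' P₁).prodMap (QuotientAddGroup.mk' P₂)
  have hq : Function.Surjective q :=
    (QuotientAddGroup.mk'_surjective P₁).prodMap (QuotientAddGroup.mk'_surjective P₂)
  have hcomp : ψ.comp q = (QuotientAddGroup.mk' Q).comp f :=
    AddMonoidHom.ext fun a => hψ a.1 a.2
  have hker : (QuotientAddGroup.mk' Q).ker ≤ q.ker.map f := by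
    rwa [AddMonoidHom.ker_prodMap, QuotientAddGroup.ker_mk', QuotientAddGroup.ker_mk',
      QuotientAddGroup.ker_mk']
  rw [ker_eq_map_ker_of_comp_eq hq hcomp hker, hf, AddMonoidHom.map_zmultiples]
  rfl

end ExactSequence

namespace Multigraph

section DivisorsOfFunctions

variable (G : Multigraph)

/-- The boundary `[a] - [b]` of an edge with ordered pair of endpoints `(a, b)`, in terms of which
divisors of functions decompose edge by edge; reversing the edge changes its sign. -/
def boundary (e : G.E) : G.V → ℤ := Pi.single (G.ends e).1 1 - Pi.single (G.ends e).2 1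

theorem degree_boundary (e : G.E) : degree (G.boundary e) = 0 := by
  simp [degree, boundary]

theorem divOf_eq_sum_boundary (f : G.V → ℤ) :
    G.divOf f = ∑ e, (f (G.ends e).1 - f (G.ends e).2) • G.boundary e := by
  funext v
  rw [divOf, Finset.sum_apply]
  refine Finset.sum_congr rfl fun e _ => ?_
  simp only [boundary, Pi.smul_apply, Pi.sub_apply, Pi.single_apply, eq_comm (a := v), smul_eq_mul]
  split_ifs with ha hb hb <;> simp [ha, hb]

theorem degree_divOf (f : G.V → ℤ) : degree (G.divOf f) = 0 := by
  simp only [divOf_eq_sum_boundary, degree, Finset.sum_apply, Pi.smul_apply]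
  rw [Finset.sum_comm]
  refine Finset.sum_eq_zero fun e _ => ?_
  rw [← Finset.smul_sum, ← degree, degree_boundary, smul_zero]

/-- The homomorphism `f ↦ div(f)` from integer-valued functions to divisors (the graph Laplacian),
whose range is `Prin(G)`. -/
def divHom : (G.V → ℤ) →+ (G.V → ℤ) :=
  AddMonoidHom.mk' G.divOf fun f g => by
    simp only [divOf_eq_sum_boundary, Pi.add_apply, add_sub_add_comm, add_smul,
      Finset.sum_add_distrib]

theorem divOf_sub_const (f : G.V → ℤ) (c : ℤ) : G.divOf (fun x => f x - c) = G.divOf f := by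
  simp only [divOf_eq_sum_boundary, sub_sub_sub_cancel_right]

theorem T_eq_neg_divOf_single (u : G.V) : G.T u = -G.divOf (Pi.single u 1) := by
  funext w
  simp only [T, inter, divOf_eq_sum_boundary, boundary, Pi.neg_apply, Finset.sum_apply,
    Pi.smul_apply, Pi.sub_apply, Pi.single_apply, smul_eq_mul]
  split_ifs with huw
  · -- A loop at `u` adds `2` to the valency and `1` to the loops: it cancels, as does its boundary.
    subst huw
    simp only [valency, numLoops, Finset.card_filter, Nat.cast_sum, Finset.mul_sum,
      ← Finset.sum_neg_distrib, ← Finset.sum_add_distrib]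
    refine Finset.sum_congr rfl fun e _ => ?_
    rcases G.ends e with ⟨a, b⟩
    grind
  · simp only [numEdges, Finset.card_filter, Nat.cast_sum, ← Finset.sum_neg_distrib]
    refine Finset.sum_congr rfl fun e _ => ?_
    rcases G.ends e with ⟨a, b⟩
    grind

theorem Prin_eq_range_divHom : G.Prin = G.divHom.range := by
  apply le_antisymm
  · rw [Prin, AddSubgroup.closure_le]
    rintro _ ⟨u, rfl⟩
    exact ⟨-Pi.single u 1, (map_neg _ _).trans (G.T_eq_neg_divOf_single u).symm⟩
  · rintro _ ⟨f, rfl⟩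
    rw [← Finset.univ_sum_single f, map_sum]
    refine G.Prin.sum_mem fun u _ => ?_
    have hdiv : G.divHom (Pi.single u (f u)) = -(f u • G.T u) := by
      rw [T_eq_neg_divOf_single, smul_neg, neg_neg]
      refine Eq.trans ?_ (map_zsmul G.divHom (f u) (Pi.single u 1))
      rw [← Pi.single_smul, smul_eq_mul, mul_one]
    have hT : G.T u ∈ G.Prin := AddSubgroup.subset_closure ⟨u, rfl⟩
    exact hdiv ▸ neg_mem (zsmul_mem hT (f u))

variable {G}

theorem divOf_mem_Prin (f : G.V → ℤ) : G.divOf f ∈ G.Prin := by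
  rw [Prin_eq_range_divHom]
  exact ⟨f, rfl⟩

theorem exists_divOf_eq_of_mem_Prin (v : G.V) {D : G.V → ℤ} (hD : D ∈ G.Prin) :
    ∃ f, f v = 0 ∧ G.divOf f = D := by
  rw [Prin_eq_range_divHom] at hD
  obtain ⟨f, rfl⟩ := hD
  exact ⟨fun x => f x - f v, sub_self _, G.divOf_sub_const f (f v)⟩

theorem degree_eq_zero_of_mem_Prin {D : G.V → ℤ} (hD : D ∈ G.Prin) : degree D = 0 := by
  rw [Prin_eq_range_divHom] at hD
  obtain ⟨f, rfl⟩ := hD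
  exact G.degree_divOf f

theorem eq_zero_of_zsmul_single_mem_Prin {v : G.V} {n : ℤ}
    (h : n • (Pi.single v 1 : G.V → ℤ) ∈ G.Prin) : n = 0 := by
  simpa [degree, ← Finset.mul_sum] using degree_eq_zero_of_mem_Prin h

theorem zsmul_mk_single_injective (v : G.V) :
    Function.Injective fun n : ℤ => n • ((Pi.single v 1 : G.V → ℤ) : G.Jac) := by
  intro m n hmn
  have hsub : (m - n) • ((Pi.single v 1 : G.V → ℤ) : G.Jac) = 0 := by
    rw [sub_smul, sub_eq_zero]
    exact hmn
  rw [← QuotientAddGroup.mk_zsmul, QuotientAddGroup.eq_zero_iff] at hsub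
  exact sub_eq_zero.1 (eq_zero_of_zsmul_single_mem_Prin hsub)

end DivisorsOfFunctions

section ExtensionByZero

variable (G : Multigraph)

theorem iota_apply_of_mem {Vs : Finset G.V} (D : {x // x ∈ Vs} → ℤ) {x : G.V} (hx : x ∈ Vs) :
    G.iota Vs D x = D ⟨x, hx⟩ := dif_pos hx

theorem iota_apply_of_notMem {Vs : Finset G.V} (D : {x // x ∈ Vs} → ℤ) {x : G.V} (hx : x ∉ Vs) :
    G.iota Vs D x = 0 := dif_neg hx

/-- Extension of divisors by zero `Div(H) → Div(G)`, bundled as a homomorphism. -/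
def iotaHom (Vs : Finset G.V) : ({x // x ∈ Vs} → ℤ) →+ (G.V → ℤ) :=
  AddMonoidHom.mk' (G.iota Vs) fun D D' => by
    funext x
    by_cases hx : x ∈ Vs <;> simp [iota, hx]

theorem iotaHom_single (Vs : Finset G.V) (x : {x // x ∈ Vs}) (c : ℤ) :
    G.iotaHom Vs (Pi.single x c) = Pi.single x.1 c := by
  funext y
  by_cases hy : y ∈ Vs
  · refine (G.iota_apply_of_mem _ hy).trans ?_
    simp only [Pi.single_apply, Subtype.ext_iff]
  · have hyx : y ≠ x.1 := fun h => hy (h ▸ x.2)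
    exact (G.iota_apply_of_notMem _ hy).trans (Pi.single_eq_of_ne (M := fun _ => ℤ) hyx c).symm

theorem iota_divOf_subgraph {Vs : Finset G.V} {Es : Finset G.E}
    (h : ∀ e ∈ Es, (G.ends e).1 ∈ Vs ∧ (G.ends e).2 ∈ Vs) (f : G.V → ℤ) :
    G.iota Vs ((G.subgraph Vs Es h).divOf (Vs.restrict f)) =
      ∑ e ∈ Es, (f (G.ends e).1 - f (G.ends e).2) • G.boundary e := by
  have hboundary (e : {e // e ∈ Es}) :
      G.iotaHom Vs ((G.subgraph Vs Es h).boundary e) = G.boundary e :=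
    (map_sub _ _ _).trans (congrArg₂ _ (G.iotaHom_single ..) (G.iotaHom_single ..))
  refine (congrArg (G.iotaHom Vs) ((G.subgraph Vs Es h).divOf_eq_sum_boundary _)).trans ?_
  rw [← Finset.sum_coe_sort Es]
  refine (map_sum (G.iotaHom Vs) _ _).trans (Finset.sum_congr rfl fun e _ => ?_)
  exact (map_zsmul _ _ _).trans (congrArg _ (hboundary e))

end ExtensionByZero

section Gluing

variable (G : Multigraph) {V₁ V₂ : Finset G.V} {E₁ E₂ : Finset G.E} {v : G.V}

/-- The sum map `Div(H₁) ⊕ Div(H₂) → Div(G)`. It depends only on the vertex sets `V₁` and `V₂` of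
the two subgraphs. -/
def divSum (V₁ V₂ : Finset G.V) :
    ({x // x ∈ V₁} → ℤ) × ({x // x ∈ V₂} → ℤ) →+ (G.V → ℤ) :=
  (G.iotaHom V₁).coprod (G.iotaHom V₂)

theorem divSum_apply (D₁ : {x // x ∈ V₁} → ℤ) (D₂ : {x // x ∈ V₂} → ℤ) :
    G.divSum V₁ V₂ (D₁, D₂) = G.iotaHom V₁ D₁ + G.iotaHom V₂ D₂ := rfl

theorem divSum_surjective (hV : V₁ ∪ V₂ = Finset.univ) :
    Function.Surjective (G.divSum V₁ V₂) := by
  intro D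
  refine ⟨(fun x => D x, fun x => if x.1 ∈ V₁ then 0 else D x), ?_⟩
  funext x
  have hx : x ∈ V₁ ∨ x ∈ V₂ := Finset.mem_union.1 (hV ▸ Finset.mem_univ x)
  change G.iota V₁ _ x + G.iota V₂ _ x = D x
  by_cases h₁ : x ∈ V₁
  · by_cases h₂ : x ∈ V₂ <;> simp [iota, h₁, h₂]
  · simp [iota, h₁, hx.resolve_left h₁]

theorem divSum_swap (p : ({x // x ∈ V₁} → ℤ) × ({x // x ∈ V₂} → ℤ)) :
    G.divSum V₂ V₁ p.swap = G.divSum V₁ V₂ p :=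
  add_comm _ _

theorem restrict_divSum_left (hv : V₁ ∩ V₂ = {v}) (hv₁ : v ∈ V₁) (hv₂ : v ∈ V₂)
    (D₁ : {x // x ∈ V₁} → ℤ) (D₂ : {x // x ∈ V₂} → ℤ) :
    V₁.restrict (G.divSum V₁ V₂ (D₁, D₂)) = D₁ + Pi.single ⟨v, hv₁⟩ (D₂ ⟨v, hv₂⟩) := by
  funext ⟨x, hx⟩
  refine congrArg₂ (· + ·) (G.iota_apply_of_mem D₁ hx) ?_
  rcases eq_or_ne x v with rfl | hxv
  · exact (G.iota_apply_of_mem D₂ hv₂).trans (Pi.single_eq_same (M := fun _ => ℤ) _ _).symm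
  · have hx₂ : x ∉ V₂ := fun hx₂ =>
      hxv (Finset.mem_singleton.1 (hv ▸ Finset.mem_inter.2 ⟨hx, hx₂⟩))
    rw [Pi.single_eq_of_ne (Subtype.coe_ne_coe.1 hxv)]
    exact G.iota_apply_of_notMem D₂ hx₂

theorem restrict_divSum_right (hv : V₁ ∩ V₂ = {v}) (hv₁ : v ∈ V₁) (hv₂ : v ∈ V₂)
    (D₁ : {x // x ∈ V₁} → ℤ) (D₂ : {x // x ∈ V₂} → ℤ) :
    V₂.restrict (G.divSum V₁ V₂ (D₁, D₂)) = D₂ + Pi.single ⟨v, hv₂⟩ (D₁ ⟨v, hv₁⟩) := by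
  rw [← divSum_swap]
  exact G.restrict_divSum_left (Finset.inter_comm V₁ V₂ ▸ hv) hv₂ hv₁ D₂ D₁

theorem exists_restrict_eq (hv : V₁ ∩ V₂ = {v}) (hv₁ : v ∈ V₁) (hv₂ : v ∈ V₂)
    {f₁ : {x // x ∈ V₁} → ℤ} {f₂ : {x // x ∈ V₂} → ℤ} (hf : f₁ ⟨v, hv₁⟩ = f₂ ⟨v, hv₂⟩) :
    ∃ f : G.V → ℤ, V₁.restrict f = f₁ ∧ V₂.restrict f = f₂ := by
  refine ⟨G.divSum V₁ V₂ (f₁, f₂ - Pi.single ⟨v, hv₂⟩ (f₂ ⟨v, hv₂⟩)), ?_, ?_⟩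
  · rw [G.restrict_divSum_left hv hv₁ hv₂, Pi.sub_apply, Pi.single_eq_same, sub_self,
      Pi.single_zero, add_zero]
  · rw [G.restrict_divSum_right hv hv₁ hv₂, hf, sub_add_cancel]

theorem ker_divSum (hv : V₁ ∩ V₂ = {v}) (hv₁ : v ∈ V₁) (hv₂ : v ∈ V₂) :
    (G.divSum V₁ V₂).ker =
      AddSubgroup.zmultiples (Pi.single ⟨v, hv₁⟩ 1, -Pi.single ⟨v, hv₂⟩ 1) := by
  apply le_antisymm
  · rintro ⟨D₁, D₂⟩ (hD : G.divSum V₁ V₂ (D₁, D₂) = 0)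
    have hrestrict₁ := G.restrict_divSum_left hv hv₁ hv₂ D₁ D₂
    have hrestrict₂ := G.restrict_divSum_right hv hv₁ hv₂ D₁ D₂
    rw [hD] at hrestrict₁ hrestrict₂
    have hD₁ : D₁ = -Pi.single ⟨v, hv₁⟩ (D₂ ⟨v, hv₂⟩) := eq_neg_of_add_eq_zero_left hrestrict₁.symm
    have hD₂ : D₂ = -Pi.single ⟨v, hv₂⟩ (D₁ ⟨v, hv₁⟩) := eq_neg_of_add_eq_zero_left hrestrict₂.symm
    have hval : D₂ ⟨v, hv₂⟩ = -D₁ ⟨v, hv₁⟩ := by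
      simpa only [Pi.neg_apply, Pi.single_eq_same] using congrFun hD₂ ⟨v, hv₂⟩
    rw [hval, Pi.single_neg, neg_neg] at hD₁
    refine ⟨D₁ ⟨v, hv₁⟩, ?_⟩
    simp only [Prod.smul_mk, smul_neg, ← Pi.single_smul, smul_eq_mul, mul_one]
    exact Prod.ext hD₁.symm hD₂.symm
  · rw [AddSubgroup.zmultiples_le, AddMonoidHom.mem_ker, divSum_apply, map_neg,
      iotaHom_single, iotaHom_single, add_neg_cancel]

theorem divOf_eq_divSum (h₁ : ∀ e ∈ E₁, (G.ends e).1 ∈ V₁ ∧ (G.ends e).2 ∈ V₁)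
    (h₂ : ∀ e ∈ E₂, (G.ends e).1 ∈ V₂ ∧ (G.ends e).2 ∈ V₂)
    (hE : E₁ ∪ E₂ = Finset.univ) (hdisj : E₁ ∩ E₂ = ∅) (f : G.V → ℤ) :
    G.divOf f = G.divSum V₁ V₂ ((G.subgraph V₁ E₁ h₁).divOf (V₁.restrict f),
      (G.subgraph V₂ E₂ h₂).divOf (V₂.restrict f)) := by
  rw [divOf_eq_sum_boundary, ← hE, Finset.sum_union (Finset.disjoint_iff_inter_eq_empty.2 hdisj),
    ← G.iota_divOf_subgraph h₁, ← G.iota_divOf_subgraph h₂]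
  rfl

theorem map_divSum_Prin (h₁ : ∀ e ∈ E₁, (G.ends e).1 ∈ V₁ ∧ (G.ends e).2 ∈ V₁)
    (h₂ : ∀ e ∈ E₂, (G.ends e).1 ∈ V₂ ∧ (G.ends e).2 ∈ V₂)
    (hv : V₁ ∩ V₂ = {v}) (hE : E₁ ∪ E₂ = Finset.univ) (hdisj : E₁ ∩ E₂ = ∅) :
    ((G.subgraph V₁ E₁ h₁).Prin.prod (G.subgraph V₂ E₂ h₂).Prin).map (G.divSum V₁ V₂) =
      G.Prin := by
  obtain ⟨hv₁, hv₂⟩ := Finset.mem_inter.1 (hv ▸ Finset.mem_singleton_self v)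
  apply le_antisymm
  · rintro _ ⟨⟨D₁, D₂⟩, ⟨hD₁, hD₂⟩, rfl⟩
    obtain ⟨f₁, hf₁, rfl⟩ := exists_divOf_eq_of_mem_Prin (G := G.subgraph V₁ E₁ h₁) ⟨v, hv₁⟩ hD₁
    obtain ⟨f₂, hf₂, rfl⟩ := exists_divOf_eq_of_mem_Prin (G := G.subgraph V₂ E₂ h₂) ⟨v, hv₂⟩ hD₂
    obtain ⟨f, rfl, rfl⟩ := G.exists_restrict_eq hv hv₁ hv₂ (hf₁.trans hf₂.symm)
    exact G.divOf_eq_divSum h₁ h₂ hE hdisj f ▸ divOf_mem_Prin f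
  · intro D hD
    obtain ⟨f, -, rfl⟩ := exists_divOf_eq_of_mem_Prin v hD
    exact ⟨_, ⟨divOf_mem_Prin _, divOf_mem_Prin _⟩, (G.divOf_eq_divSum h₁ h₂ hE hdisj f).symm⟩

theorem eq_zero_of_divSum_eq_zero (h₁ : ∀ e ∈ E₁, (G.ends e).1 ∈ V₁ ∧ (G.ends e).2 ∈ V₁)
    (hv : V₁ ∩ V₂ = {v}) {D₁ : {x // x ∈ V₁} → ℤ} {D₂ : {x // x ∈ V₂} → ℤ}
    (hD₁ : D₁ ∈ (G.subgraph V₁ E₁ h₁).Prin) (hD : G.divSum V₁ V₂ (D₁, D₂) = 0) :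
    (D₁, D₂) = 0 := by
  obtain ⟨hv₁, hv₂⟩ := Finset.mem_inter.1 (hv ▸ Finset.mem_singleton_self v)
  have hker : (D₁, D₂) ∈ (G.divSum V₁ V₂).ker := hD
  rw [G.ker_divSum hv hv₁ hv₂] at hker
  obtain ⟨n, hn⟩ := AddSubgroup.mem_zmultiples_iff.1 hker
  obtain rfl : n • Pi.single ⟨v, hv₁⟩ 1 = D₁ := congrArg Prod.fst hn
  have hn₀ : n = 0 := eq_zero_of_zsmul_single_mem_Prin hD₁
  rw [← hn, hn₀, zero_smul]

end Gluing

end Multigraph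

open Multigraph in
theorem wedge_decomposition_of_divisors_general (G : Multigraph) {V₁ V₂ : Finset G.V}
    {E₁ E₂ : Finset G.E} {v : G.V} (hv₁ : v ∈ V₁) (hv₂ : v ∈ V₂)
    (hV : V₁ ∪ V₂ = Finset.univ) (hv : V₁ ∩ V₂ = {v})
    (hE : E₁ ∪ E₂ = Finset.univ) (hdisj : E₁ ∩ E₂ = ∅)
    (h₁ : ∀ e ∈ E₁, (G.ends e).1 ∈ V₁ ∧ (G.ends e).2 ∈ V₁)
    (h₂ : ∀ e ∈ E₂, (G.ends e).1 ∈ V₂ ∧ (G.ends e).2 ∈ V₂)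
    (phi : (((G.subgraph V₁ E₁ h₁).V → ℤ) × ((G.subgraph V₂ E₂ h₂).V → ℤ)) →+ (G.V → ℤ))
    (hphi : ∀ p, phi p = G.iota V₁ p.1 + G.iota V₂ p.2)
    (d1 : (G.subgraph V₁ E₁ h₁).V → ℤ)
    (hd1 : d1 = fun x => if x = (⟨v, hv₁⟩ : (G.subgraph V₁ E₁ h₁).V) then 1 else 0)
    (d2 : (G.subgraph V₂ E₂ h₂).V → ℤ)
    (hd2 : d2 = fun x => if x = (⟨v, hv₂⟩ : (G.subgraph V₂ E₂ h₂).V) then 1 else 0) :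
    Function.Surjective phi ∧
    phi.ker = AddSubgroup.zmultiples (d1, -d2) ∧
    Function.Injective (fun n : ℤ => n • (d1, -d2)) ∧
    ((G.subgraph V₁ E₁ h₁).Prin.prod (G.subgraph V₂ E₂ h₂).Prin).map phi = G.Prin ∧
    (∀ p ∈ (G.subgraph V₁ E₁ h₁).Prin.prod (G.subgraph V₂ E₂ h₂).Prin, phi p = 0 → p = 0) ∧
    (∀ psi : (G.subgraph V₁ E₁ h₁).Jac × (G.subgraph V₂ E₂ h₂).Jac →+ G.Jac,
      (∀ D1 D2, psi (QuotientAddGroup.mk D1, QuotientAddGroup.mk D2) =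
        QuotientAddGroup.mk (phi (D1, D2))) →
      Function.Surjective psi ∧
      ∀ alpha : ℤ →+ (G.subgraph V₁ E₁ h₁).Jac × (G.subgraph V₂ E₂ h₂).Jac,
        alpha 1 = (QuotientAddGroup.mk d1, QuotientAddGroup.mk (-d2)) →
        Function.Injective alpha ∧ alpha.range = psi.ker) := by
  obtain rfl : phi = G.divSum V₁ V₂ := AddMonoidHom.ext hphi
  obtain rfl : d1 = Pi.single ⟨v, hv₁⟩ 1 := hd1.trans (funext fun x => (Pi.single_apply _ _ x).symm)
  obtain rfl : d2 = Pi.single ⟨v, hv₂⟩ 1 := hd2.trans (funext fun x => (Pi.single_apply _ _ x).symm)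
  have hker := G.ker_divSum hv hv₁ hv₂
  have hmap := G.map_divSum_Prin h₁ h₂ hv hE hdisj
  have hinj := zsmul_mk_single_injective (G := G.subgraph V₁ E₁ h₁) ⟨v, hv₁⟩
  refine ⟨G.divSum_surjective hV, hker, fun m n hmn => hinj ?_, hmap,
    fun p hp => G.eq_zero_of_divSum_eq_zero h₁ hv hp.1, fun psi hpsi =>
      ⟨surjective_of_prod_quotient hpsi (G.divSum_surjective hV), fun alpha halpha => ⟨?_, ?_⟩⟩⟩
  · exact congrArg (fun p => QuotientAddGroup.mk p.1) hmn
  · refine Function.Injective.of_comp (f := Prod.fst) ?_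
    convert hinj using 2 with n
    rw [Function.comp_apply, alpha.apply_int, halpha, Prod.smul_fst]
  · rw [range_eq_zmultiples_apply_one, halpha]
    exact (ker_eq_zmultiples_of_prod_quotient hpsi hmap.ge hker).symm

open Multigraph in
/-- For a connected graph `G` with a cut-vertex decomposition
`G = H₁ ∨ H₂`, the sum map `Div(H₁) ⊕ Div(H₂) → Div(G)` is a surjective homomorphism
with kernel the infinite cyclic group generated by `(v, -v)`; it restricts to an
isomorphism `Prin(H₁) ⊕ Prin(H₂) ≅ Prin(G)` and induces an exact sequence
`0 → ℤ → Jac(H₁) ⊕ Jac(H₂) → Jac(G) → 0`. -/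
theorem wedge_decomposition_of_divisors (G : Multigraph) (hG : G.Connected) (W : G.Wedge)
    (phi : ((W.H1.V → ℤ) × (W.H2.V → ℤ)) →+ (G.V → ℤ))
    (hphi : ∀ p : (W.H1.V → ℤ) × (W.H2.V → ℤ), phi p = G.iota W.V1 p.1 + G.iota W.V2 p.2)
    (d1 : W.H1.V → ℤ) (hd1 : d1 = fun x => if x = (⟨W.v, W.hv1⟩ : W.H1.V) then 1 else 0)
    (d2 : W.H2.V → ℤ) (hd2 : d2 = fun x => if x = (⟨W.v, W.hv2⟩ : W.H2.V) then 1 else 0) :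
    Function.Surjective phi ∧
    phi.ker = AddSubgroup.zmultiples ((d1, -d2) : (W.H1.V → ℤ) × (W.H2.V → ℤ)) ∧
    Function.Injective (fun n : ℤ => n • ((d1, -d2) : (W.H1.V → ℤ) × (W.H2.V → ℤ))) ∧
    AddSubgroup.map phi ((W.H1.Prin).prod W.H2.Prin) = G.Prin ∧
    (∀ p ∈ (W.H1.Prin).prod W.H2.Prin, phi p = 0 → p = 0) ∧
    (∀ psi : (W.H1.Jac × W.H2.Jac) →+ G.Jac,
      (∀ (D1 : W.H1.V → ℤ) (D2 : W.H2.V → ℤ),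
          psi (QuotientAddGroup.mk D1, QuotientAddGroup.mk D2)
            = QuotientAddGroup.mk (phi (D1, D2))) →
      Function.Surjective psi ∧
      ∀ alpha : ℤ →+ W.H1.Jac × W.H2.Jac,
        alpha 1 = (QuotientAddGroup.mk d1, QuotientAddGroup.mk (-d2)) →
        Function.Injective alpha ∧ alpha.range = psi.ker) := by
  exact wedge_decomposition_of_divisors_general G W.hv1 W.hv2 W.cover_V W.inter_V W.cover_E
    W.disj_E W.ends1 W.ends2 phi hphi d1 hd1 d2 hd2
end

section
/- Let G be a connected loopless graph with a cut vertex and corresponding decomposition G = H₁ ∨ H₂, let m, n be nonnegative integers, and let G^{(m,n)} = H₁^{(m)} ∨ H₂^{(n)} be the refinement of G obtained by inserting m vertices in the interior of every edge of H₁ and n vertices in the interior of every edge of H₂. Then for every divisor D ∈ Div(G) one has r_G(D) = r_{G^{(m,n)}}(σ*_{m,n} D). -/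
/-! A divisor `D` on `G` is equivalent to an effective one if and only if `σ* D` is. Indeed, a
function with slopes `s` on the edges of `G` has the same divisor on `V(G)` as the function on the
refinement that is linear along the edges with slope `s`, provided there is one, that is, provided
the differences `(k e + 1) * s e` come from a function on `V(G)`. Conversely, a function on the
refinement that is concave along the edges is compared with the integer part of a rational function
on `G` whose slopes are its mean slopes along the edges. Both rescalings of slopes are possible as
soon as all edges on a common cycle carry the same number `k e` of new vertices.

It remains to see that effective divisors supported on `V(G)` suffice to test the rank on the
refinement: if `|F|` has a member containing `x` and a member containing `y`, where `x` and `y` are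
the ends of an edge of `G`, then it has a member containing any given point `p` between them. Take
the tropical sum `min f g` of functions realizing the two members, normalized so that `f p = g p`.
Its divisor has a chip at any vertex of the locus `f = g` with a neighbour outside of it, so it has
a chip on either side of `p`, and two chips on an edge can be moved towards each other. -/

namespace Multigraph

section Effective

variable {α : Type} {D E : α → ℤ}

theorem Effective.add (hD : Effective D) (hE : Effective E) : Effective (D + E) :=
  fun x => add_nonneg (hD x) (hE x)

theorem effective_single [DecidableEq α] (x : α) : Effective (Pi.single x 1) :=
  (Pi.single_nonneg.2 zero_le_one : 0 ≤ (Pi.single x 1 : α → ℤ))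

theorem effective_sub_single_iff [DecidableEq α] {x : α} :
    Effective (D - Pi.single x 1) ↔ Effective D ∧ 1 ≤ D x := by
  refine ⟨fun h => ⟨?_, by simpa using h x⟩, fun ⟨h, hx⟩ y => ?_⟩
  · simpa using h.add (effective_single x)
  · rcases eq_or_ne y x with rfl | hy
    · simpa using hx
    · simpa [hy] using h y

theorem Effective.eq_zero_of_degree_eq_zero [Fintype α] (hD : Effective D) (h : degree D = 0) :
    D = 0 :=
  (Fintype.sum_eq_zero_iff_of_nonneg hD).1 h

theorem exists_one_le_of_degree_pos [Fintype α] (h : 0 < degree D) : ∃ x, 1 ≤ D x := by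
  contrapose! h
  exact Finset.sum_nonpos fun x _ => Int.lt_add_one_iff.1 (h x)

theorem degree_add [Fintype α] (D E : α → ℤ) : degree (D + E) = degree D + degree E :=
  Finset.sum_add_distrib

theorem degree_sub [Fintype α] (D E : α → ℤ) : degree (D - E) = degree D - degree E :=
  Finset.sum_sub_distrib _ _

theorem degree_single [Fintype α] [DecidableEq α] (x : α) (c : ℤ) :
    degree (Pi.single x c) = c :=
  Fintype.sum_pi_single' x c

end Effective

section LinearEquivalence

variable {G : Multigraph} {D D' : G.V → ℤ}

theorem divOf_eq_sum (f : G.V → ℤ) :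
    G.divOf f = ∑ e, (f (G.ends e).1 - f (G.ends e).2) •
      (Pi.single (G.ends e).1 1 - Pi.single (G.ends e).2 1) := by
  ext x
  simp only [divOf, Finset.sum_apply, Pi.smul_apply, Pi.sub_apply, Pi.single_apply, smul_eq_mul]
  refine Finset.sum_congr rfl fun e _ => ?_
  simp only [eq_comm (a := x)]
  split_ifs <;> subst_vars <;> simp [*]

theorem divOf_add (f g : G.V → ℤ) : G.divOf (f + g) = G.divOf f + G.divOf g := by
  simp only [divOf_eq_sum, ← Finset.sum_add_distrib, Pi.add_apply, ← add_smul]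
  refine Finset.sum_congr rfl fun e _ => ?_
  congr 1
  ring

theorem divOf_const (c : ℤ) : G.divOf (fun _ => c) = 0 := by
  simp [divOf_eq_sum]

theorem divOf_neg (f : G.V → ℤ) : G.divOf (-f) = -G.divOf f := by
  rw [eq_neg_iff_add_eq_zero, ← divOf_add, neg_add_cancel]
  exact divOf_const 0

theorem divOf_single_comm (x y : G.V) :
    G.divOf (Pi.single x 1) y = G.divOf (Pi.single y 1) x := by
  simp only [divOf_eq_sum, Finset.sum_apply, Pi.smul_apply, Pi.sub_apply, smul_eq_mul]
  refine Finset.sum_congr rfl fun e _ => ?_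
  simp only [Pi.single_comm x, Pi.single_comm y, mul_comm]

theorem divOf_single (x : G.V) : G.divOf (Pi.single x 1) = -G.T x := by
  ext y
  simp only [T, inter, divOf, valency, numLoops, numEdges, Finset.card_filter, Pi.neg_apply]
  split_ifs with h
  · subst h
    push_cast
    rw [Finset.mul_sum, neg_add, neg_neg, ← sub_eq_add_neg, ← Finset.sum_sub_distrib]
    refine Finset.sum_congr rfl fun e _ => ?_
    simp only [Pi.single_apply, Prod.ext_iff]
    split_ifs <;> simp_all
  · push_cast
    rw [← Finset.sum_neg_distrib]
    refine Finset.sum_congr rfl fun e _ => ?_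
    simp only [Pi.single_apply, Prod.ext_iff]
    split_ifs <;> simp_all

theorem mem_Prin_iff : D ∈ G.Prin ↔ ∃ f, G.divOf f = D := by
  let div : (G.V → ℤ) →+ (G.V → ℤ) := AddMonoidHom.mk' G.divOf divOf_add
  suffices G.Prin = div.range by rw [this]; rfl
  have div_single (x : G.V) : div (Pi.single x 1) = -G.T x := divOf_single x
  apply le_antisymm
  · rw [Prin, AddSubgroup.closure_le]
    rintro _ ⟨x, rfl⟩
    exact ⟨-Pi.single x 1, by rw [map_neg, div_single, neg_neg]⟩
  · rintro _ ⟨f, rfl⟩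
    rw [pi_eq_sum_univ' f, map_sum]
    refine AddSubgroup.sum_mem _ fun x _ => ?_
    have hT : -G.T x ∈ G.Prin := neg_mem (AddSubgroup.subset_closure ⟨x, rfl⟩)
    rw [map_zsmul, div_single]
    exact AddSubgroup.zsmul_mem _ hT _

variable (G) in
/-- A divisor is winnable (in the terminology of chip firing) if it is linearly equivalent to an
effective divisor. It is encoded through a function realizing the equivalence. -/
def Winnable (D : G.V → ℤ) : Prop := ∃ f, Effective (D + G.divOf f)

theorem winnable_iff_exists_effective :
    G.Winnable D ↔ ∃ F : G.V → ℤ, Effective F ∧ D - F ∈ G.Prin := by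
  constructor
  · rintro ⟨f, hf⟩
    exact ⟨_, hf, mem_Prin_iff.2 ⟨-f, by rw [divOf_neg]; abel⟩⟩
  · rintro ⟨F, hF, h⟩
    obtain ⟨f, hf⟩ := mem_Prin_iff.1 h
    exact ⟨-f, by rwa [divOf_neg, hf, neg_sub, add_sub_cancel]⟩

theorem Effective.winnable_of_sub_mem_Prin (hD' : Effective D') (h : D - D' ∈ G.Prin) :
    G.Winnable D :=
  winnable_iff_exists_effective.2 ⟨D', hD', h⟩

theorem Effective.winnable (hD : Effective D) : G.Winnable D :=
  hD.winnable_of_sub_mem_Prin (by rw [sub_self]; exact zero_mem _)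

theorem Winnable.of_add_divOf {f : G.V → ℤ} : G.Winnable (D + G.divOf f) → G.Winnable D :=
  fun ⟨g, hg⟩ => ⟨f + g, by rwa [divOf_add, ← add_assoc]⟩

theorem winnable_sub_single_iff {x : G.V} : G.Winnable (D - Pi.single x 1) ↔
    ∃ f, Effective (D + G.divOf f) ∧ 1 ≤ (D + G.divOf f) x := by
  simp only [Winnable, sub_add_eq_add_sub, effective_sub_single_iff]

end LinearEquivalence

section TropicalSum

variable {G : Multigraph} {D f g h : G.V → ℤ} {x y : G.V}

theorem divOf_apply_le_of_le (hle : h ≤ f) (hx : h x = f x) : G.divOf f x ≤ G.divOf h x := by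
  refine Finset.sum_le_sum fun e _ => ?_
  rw [hx]
  gcongr <;> split_ifs <;> first | exact sub_le_sub_left (hle _) _ | rfl

theorem divOf_apply_lt_of_adj (hle : h ≤ f) (hx : h x = f x) (hxy : G.Adj x y) (hy : h y < f y) :
    G.divOf f x < G.divOf h x := by
  obtain ⟨e, he⟩ := hxy
  refine Finset.sum_lt_sum (fun e _ => ?_) ⟨e, Finset.mem_univ e, ?_⟩
  · rw [hx]
    gcongr <;> split_ifs <;> first | exact sub_le_sub_left (hle _) _ | rfl
  · have hne : x ≠ y := by rintro rfl; exact hy.ne hx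
    rcases he with he | he <;> simp [he, hx, hy, hne.symm]

theorem Effective.add_divOf_inf (hf : Effective (D + G.divOf f)) (hg : Effective (D + G.divOf g)) :
    Effective (D + G.divOf (f ⊓ g)) := by
  intro x
  rcases le_total (f x) (g x) with hx | hx
  · exact (hf x).trans (add_le_add_right (divOf_apply_le_of_le inf_le_left (inf_eq_left.2 hx)) _)
  · exact (hg x).trans (add_le_add_right (divOf_apply_le_of_le inf_le_right (inf_eq_right.2 hx)) _)

theorem one_le_add_divOf_inf_of_adj (hf : Effective (D + G.divOf f))
    (hg : Effective (D + G.divOf g)) (hx : f x = g x) (hxy : G.Adj x y) (hy : f y ≠ g y) :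
    1 ≤ (D + G.divOf (f ⊓ g)) x := by
  rcases hy.lt_or_gt with hy | hy
  · exact (hg x).trans_lt (add_lt_add_right
      (divOf_apply_lt_of_adj inf_le_right (inf_eq_right.2 hx.ge) hxy (inf_lt_right.2 hy.not_ge)) _)
  · exact (hf x).trans_lt (add_lt_add_right
      (divOf_apply_lt_of_adj inf_le_left (inf_eq_left.2 hx.le) hxy (inf_lt_left.2 hy.not_ge)) _)

theorem exists_one_le_add_divOf_inf_of_walk (hf : Effective (D + G.divOf f))
    (hg : Effective (D + G.divOf g)) {w : ℕ → G.V} {n : ℕ}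
    (hw : ∀ i < n, G.Adj (w (i + 1)) (w i)) (h₀ : 1 ≤ (D + G.divOf f) (w 0))
    (hn : f (w n) = g (w n)) : ∃ i ≤ n, 1 ≤ (D + G.divOf (f ⊓ g)) (w i) := by
  induction n with
  | zero =>
    exact ⟨0, le_rfl, h₀.trans
      (add_le_add_right (divOf_apply_le_of_le inf_le_left (inf_eq_left.2 hn.le)) _)⟩
  | succ n ih =>
    by_cases hn' : f (w n) = g (w n)
    · obtain ⟨i, hi, hpos⟩ := ih (fun i hi => hw i (hi.trans n.lt_succ_self)) hn'
      exact ⟨i, hi.trans n.le_succ, hpos⟩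
    · exact ⟨n + 1, le_rfl, one_le_add_divOf_inf_of_adj hf hg hn (hw n n.lt_succ_self) hn'⟩

end TropicalSum

section Sequences

theorem sum_range_sub_smul_sub {R M : Type*} [CommRing R] [AddCommGroup M] [Module R M]
    (a : ℕ → R) (u : ℕ → M) (n : ℕ) :
    ∑ i ∈ Finset.range (n + 1), (a i - a (i + 1)) • (u i - u (i + 1)) =
      (a 0 - a 1) • u 0 + (a (n + 1) - a n) • u (n + 1) +
        ∑ i ∈ Finset.range n, (2 * a (i + 1) - a i - a (i + 2)) • u (i + 1) := by
  induction n with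
  | zero => simp; module
  | succ n ih =>
    rw [Finset.sum_range_succ, ih, Finset.sum_range_succ _ n]
    module

theorem eq_add_nsmul_of_add_eq_two_nsmul {M : Type*} [AddCommGroup M] {u : ℕ → M} {n : ℕ}
    (hu : ∀ i < n, u i + u (i + 2) = 2 • u (i + 1)) {i : ℕ} (hi : i ≤ n + 1) :
    u i = u 0 + i • (u 1 - u 0) := by
  induction i using Nat.twoStepInduction with
  | zero => simp
  | one => simp
  | more i ih₀ ih₁ =>
    rw [← add_right_inj (u i), hu i (by omega), ih₀ (by omega), ih₁ (by omega)]
    module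

theorem slopes_le_of_concave {R : Type*} [CommRing R] [LinearOrder R] [IsStrictOrderedRing R]
    {a : ℕ → R} {n : ℕ} (ha : ∀ i < n, a i + a (i + 2) ≤ 2 * a (i + 1)) :
    (n + 1) * (a 0 - a 1) ≤ a 0 - a (n + 1) ∧ a 0 - a (n + 1) ≤ (n + 1) * (a n - a (n + 1)) := by
  induction n with
  | zero => simp
  | succ n ih =>
    have hn := ha n n.lt_succ_self
    obtain ⟨ih₀, ih₁⟩ := ih fun i hi => ha i (hi.trans n.lt_succ_self)
    push_cast
    constructor <;> nlinarith

end Sequences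

section Subdivision

variable {G : Multigraph} {k : G.E → ℕ}

/-- A vertex of `G` regarded as a vertex of a refinement of `G`. -/
def oldVert (k : G.E → ℕ) (y : G.V) : (G.subdivide k).V := Sum.inl y

/-- The vertex of the refinement inserted at index `p.2` in the interior of the edge `p.1`. -/
def newVert (k : G.E → ℕ) (p : Σ e : G.E, Fin (k e)) : (G.subdivide k).V := Sum.inr p

/-- The `i`-th vertex on the path of length `k e + 1` that replaces the edge `e`: its first end for
`i = 0`, then the new vertices, whose `Fin`-index is `i - 1`, and its second end for `i = k e + 1`
(and, as a junk value, for larger `i`). -/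
def pathVert (k : G.E → ℕ) (e : G.E) (i : ℕ) : (G.subdivide k).V :=
  if i = 0 then oldVert k (G.ends e).1
  else if h : i - 1 < k e then newVert k ⟨e, i - 1, h⟩ else oldVert k (G.ends e).2

@[elab_as_elim]
theorem subdivide_vert_induction {motive : (G.subdivide k).V → Prop}
    (old : ∀ y, motive (oldVert k y)) (new : ∀ p, motive (newVert k p)) (x : (G.subdivide k).V) :
    motive x :=
  Sum.casesOn x old new

theorem oldVert_inj {y z : G.V} : oldVert k y = oldVert k z ↔ y = z := Sum.inl_injective.eq_iff

theorem newVert_inj {p q : Σ e : G.E, Fin (k e)} : newVert k p = newVert k q ↔ p = q :=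
  Sum.inr_injective.eq_iff

theorem oldVert_ne_newVert {y : G.V} {p : Σ e : G.E, Fin (k e)} : oldVert k y ≠ newVert k p :=
  Sum.inl_ne_inr

theorem newVert_ne_oldVert {y : G.V} {p : Σ e : G.E, Fin (k e)} : newVert k p ≠ oldVert k y :=
  Sum.inr_ne_inl

@[simp] theorem pathVert_zero (e : G.E) : pathVert k e 0 = oldVert k (G.ends e).1 := by
  simp [pathVert]

@[simp] theorem pathVert_last (e : G.E) : pathVert k e (k e + 1) = oldVert k (G.ends e).2 := by
  simp [pathVert]

@[simp] theorem pathVert_add_one (e : G.E) (i : Fin (k e)) :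
    pathVert k e (i + 1) = newVert k ⟨e, i⟩ := by
  simp [pathVert]

theorem pathIndex_cases {n i : ℕ} (hi : i ≤ n + 1) :
    i = 0 ∨ (∃ j : Fin n, i = j + 1) ∨ i = n + 1 := by
  rcases i with - | i
  · exact .inl rfl
  · rcases (Nat.le_of_succ_le_succ hi).lt_or_eq with hi | rfl
    · exact .inr (.inl ⟨⟨i, hi⟩, rfl⟩)
    · exact .inr (.inr rfl)

theorem pathVert_injOn {e : G.E} (he : ¬ G.IsLoop e) :
    Set.InjOn (pathVert k e) (Set.Iic (k e + 1)) := by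
  intro i hi j hj h
  rcases pathIndex_cases hi with rfl | ⟨i, rfl⟩ | rfl <;>
    rcases pathIndex_cases hj with rfl | ⟨j, rfl⟩ | rfl <;>
    simp_all [oldVert_inj, newVert_inj, oldVert_ne_newVert, newVert_ne_oldVert, IsLoop]

theorem subdivide_ends (e : G.E) (i : Fin (k e + 1)) :
    (G.subdivide k).ends ⟨e, i⟩ = (pathVert k e i, pathVert k e (i + 1)) := by
  unfold pathVert
  ext1
  · by_cases h : (i : ℕ) = 0
    · simp [subdivide, h, oldVert]
    · have : (i : ℕ) - 1 < k e := by omega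
      simp [subdivide, h, this, newVert]
  · by_cases h : (i : ℕ) = k e
    · simp [subdivide, h, oldVert]
    · have : (i : ℕ) < k e := by omega
      simp [subdivide, h, this, newVert]

theorem adj_pathVert {e : G.E} {i : ℕ} (hi : i ≤ k e) :
    (G.subdivide k).Adj (pathVert k e i) (pathVert k e (i + 1)) :=
  ⟨⟨e, i, Nat.lt_succ_of_le hi⟩, .inl (subdivide_ends e ⟨i, Nat.lt_succ_of_le hi⟩)⟩

theorem Adj.symm {x y : G.V} (h : G.Adj x y) : G.Adj y x :=
  h.imp fun _ => Or.symm

/-- The form of `div F` obtained from `divOf_eq_sum` by summation by parts along each edge. -/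
theorem divOf_subdivide_eq_sum (F : (G.subdivide k).V → ℤ) :
    (G.subdivide k).divOf F =
      ∑ e, ((F (pathVert k e 0) - F (pathVert k e 1)) • Pi.single (oldVert k (G.ends e).1) 1 +
        (F (pathVert k e (k e + 1)) - F (pathVert k e (k e))) •
          Pi.single (oldVert k (G.ends e).2) 1) +
      ∑ p : Σ e : G.E, Fin (k e), (2 * F (pathVert k p.1 (p.2 + 1)) - F (pathVert k p.1 p.2) -
        F (pathVert k p.1 (p.2 + 2))) • Pi.single (newVert k p) 1 := by
  rw [divOf_eq_sum, Fintype.sum_sigma, ← Finset.sum_add_distrib]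
  refine (Fintype.sum_sigma _).trans (Finset.sum_congr rfl fun e _ => ?_)
  simp only [subdivide_ends]
  refine (Fin.sum_univ_eq_sum_range (fun i => (F (pathVert k e i) - F (pathVert k e (i + 1))) •
    (Pi.single (pathVert k e i) 1 - Pi.single (pathVert k e (i + 1)) 1 :
      (G.subdivide k).V → ℤ)) _).trans ?_
  rw [sum_range_sub_smul_sub (fun i => F (pathVert k e i))
    (fun i => Pi.single (pathVert k e i) 1), ← Fin.sum_univ_eq_sum_range (fun i =>
      (2 * F (pathVert k e (i + 1)) - F (pathVert k e i) - F (pathVert k e (i + 2))) •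
        (Pi.single (pathVert k e (i + 1)) 1 : (G.subdivide k).V → ℤ))]
  simp

theorem divOf_subdivide_oldVert (F : (G.subdivide k).V → ℤ) (y : G.V) :
    (G.subdivide k).divOf F (oldVert k y) =
      ∑ e, ((if (G.ends e).1 = y then F (pathVert k e 0) - F (pathVert k e 1) else 0) +
        (if (G.ends e).2 = y then F (pathVert k e (k e + 1)) - F (pathVert k e (k e)) else 0)) := by
  simp [divOf_subdivide_eq_sum, Pi.single_apply, oldVert_inj, eq_comm (a := oldVert k y),
    newVert_ne_oldVert]

theorem divOf_subdivide_newVert (F : (G.subdivide k).V → ℤ) (p : Σ e : G.E, Fin (k e)) :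
    (G.subdivide k).divOf F (newVert k p) = 2 * F (pathVert k p.1 (p.2 + 1)) -
      F (pathVert k p.1 p.2) - F (pathVert k p.1 (p.2 + 2)) := by
  simp [divOf_subdivide_eq_sum, Pi.single_apply, newVert_inj, newVert_ne_oldVert]

theorem divOf_single_newVert (p : Σ e : G.E, Fin (k e)) :
    (G.subdivide k).divOf (Pi.single (newVert k p) 1) =
      2 • Pi.single (pathVert k p.1 (p.2 + 1)) 1 - Pi.single (pathVert k p.1 p.2) 1 -
        Pi.single (pathVert k p.1 (p.2 + 2)) 1 := by
  ext x
  rw [divOf_single_comm, divOf_subdivide_newVert]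
  simp [Pi.single_comm x]

end Subdivision

section Chips

variable {G : Multigraph} {k : G.E → ℕ}

/-- The classes of consecutive vertices on a subdivided edge form an arithmetic progression in the
Jacobian, since the principal divisor at an interior vertex is a second difference. -/
theorem mk_single_pathVert {e : G.E} {i : ℕ} (hi : i ≤ k e + 1) :
    (QuotientAddGroup.mk (Pi.single (pathVert k e i) 1) : (G.subdivide k).Jac) =
      QuotientAddGroup.mk (Pi.single (pathVert k e 0) 1) +
        i • (QuotientAddGroup.mk (Pi.single (pathVert k e 1) 1) -
          QuotientAddGroup.mk (Pi.single (pathVert k e 0) 1)) := by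
  refine eq_add_nsmul_of_add_eq_two_nsmul
    (u := fun i => (QuotientAddGroup.mk (Pi.single (pathVert k e i) 1) : (G.subdivide k).Jac))
    (fun i hi => Eq.symm ?_) hi
  refine QuotientAddGroup.eq_iff_sub_mem.2 (mem_Prin_iff.2 ⟨Pi.single (newVert k ⟨e, i, hi⟩) 1, ?_⟩)
  rw [divOf_single_newVert, sub_sub]

theorem single_pathVert_add_sub_mem_Prin {e : G.E} {a b c d : ℕ} (h : a + b = c + d)
    (ha : a ≤ k e + 1) (hb : b ≤ k e + 1) (hc : c ≤ k e + 1) (hd : d ≤ k e + 1) :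
    (Pi.single (pathVert k e a) 1 + Pi.single (pathVert k e b) 1) -
      (Pi.single (pathVert k e c) 1 + Pi.single (pathVert k e d) 1) ∈ (G.subdivide k).Prin := by
  refine QuotientAddGroup.eq_iff_sub_mem.1 ?_
  simp only [QuotientAddGroup.mk_add]
  rw [mk_single_pathVert ha, mk_single_pathVert hb, mk_single_pathVert hc, mk_single_pathVert hd,
    add_add_add_comm, ← add_nsmul, h, add_nsmul, add_add_add_comm]

theorem winnable_sub_single_of_two_chips {e : G.E} (he : ¬ G.IsLoop e) {D : (G.subdivide k).V → ℤ}
    (hD : Effective D) {a b p : ℕ} (hap : a ≤ p) (hpb : p ≤ b) (hb : b ≤ k e + 1)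
    (hDa : 1 ≤ D (pathVert k e a)) (hDb : 1 ≤ D (pathVert k e b)) :
    (G.subdivide k).Winnable (D - Pi.single (pathVert k e p) 1) := by
  rcases hap.eq_or_lt with rfl | hap
  · exact (effective_sub_single_iff.2 ⟨hD, hDa⟩).winnable
  rcases hpb.eq_or_lt with rfl | hpb
  · exact (effective_sub_single_iff.2 ⟨hD, hDb⟩).winnable
  have hne : pathVert k e b ≠ pathVert k e a := fun h =>
    (hap.trans hpb).ne' (pathVert_injOn he hb ((hap.trans hpb).le.trans hb) h)
  have hrest : Effective (D - Pi.single (pathVert k e a) 1 - Pi.single (pathVert k e b) 1) :=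
    effective_sub_single_iff.2 ⟨effective_sub_single_iff.2 ⟨hD, hDa⟩, by simpa [hne] using hDb⟩
  refine (hrest.add (effective_single (pathVert k e (a + b - p)))).winnable_of_sub_mem_Prin ?_
  convert single_pathVert_add_sub_mem_Prin (k := k) (e := e) (a := a) (b := b) (c := p)
    (d := a + b - p) (by omega) (by omega) hb (by omega) (by omega) using 1
  abel

theorem winnable_sub_single_pathVert {e : G.E} (he : ¬ G.IsLoop e) {D : (G.subdivide k).V → ℤ}
    (h₁ : (G.subdivide k).Winnable (D - Pi.single (oldVert k (G.ends e).1) 1))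
    (h₂ : (G.subdivide k).Winnable (D - Pi.single (oldVert k (G.ends e).2) 1)) {p : ℕ}
    (hp : p ≤ k e + 1) : (G.subdivide k).Winnable (D - Pi.single (pathVert k e p) 1) := by
  obtain ⟨f, hf, hf₁⟩ := winnable_sub_single_iff.1 h₁
  obtain ⟨g, hg, hg₂, hfg⟩ : ∃ g, Effective (D + (G.subdivide k).divOf g) ∧
      1 ≤ (D + (G.subdivide k).divOf g) (oldVert k (G.ends e).2) ∧
        f (pathVert k e p) = g (pathVert k e p) := by
    obtain ⟨g, hg, hg₂⟩ := winnable_sub_single_iff.1 h₂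
    refine ⟨g + fun _ => f (pathVert k e p) - g (pathVert k e p), ?_, ?_, by simp⟩
    · rwa [divOf_add, divOf_const, add_zero]
    · rwa [divOf_add, divOf_const, add_zero]
  obtain ⟨a, hap, hDa⟩ := exists_one_le_add_divOf_inf_of_walk hf hg (w := pathVert k e)
    (fun i hi => (adj_pathVert (by omega)).symm) (by rwa [pathVert_zero]) hfg
  obtain ⟨b, hpb, hbk, hDb⟩ : ∃ b, p ≤ b ∧ b ≤ k e + 1 ∧
      1 ≤ (D + (G.subdivide k).divOf (g ⊓ f)) (pathVert k e b) := by
    obtain ⟨i, hi, hDi⟩ := exists_one_le_add_divOf_inf_of_walk hg hf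
      (w := fun i => pathVert k e (k e + 1 - i)) (n := k e + 1 - p)
      (fun i hi => by
        have hsub : k e + 1 - i = k e + 1 - (i + 1) + 1 := by omega
        rw [hsub]
        exact adj_pathVert (by omega))
      (by simpa using hg₂) (by rw [Nat.sub_sub_self hp, hfg])
    exact ⟨k e + 1 - i, by omega, by omega, hDi⟩
  rw [inf_comm] at hDb
  have hwin := winnable_sub_single_of_two_chips he (hf.add_divOf_inf hg) hap hpb hbk hDa hDb
  rw [add_sub_right_comm] at hwin
  exact hwin.of_add_divOf

end Chips
section RankDetermining

variable {G : Multigraph} {D : G.V → ℤ}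

theorem winnable_sub_of_forall_supported {A : Set G.V}
    (hA : ∀ D : G.V → ℤ, (∀ y ∈ A, G.Winnable (D - Pi.single y 1)) → 
      ∀ x, G.Winnable (D - Pi.single x 1))
    {r : ℕ} (h : ∀ E, Effective E → (∀ x ∉ A, E x = 0) → degree E = r → G.Winnable (D - E))
    {E : G.V → ℤ} (hE : Effective E) (hdeg : degree E = r) : G.Winnable (D - E) := by
  induction r generalizing D E with
  | zero =>
    rw [hE.eq_zero_of_degree_eq_zero hdeg]
    exact h 0 (fun _ => le_rfl) (fun _ _ => rfl) Finset.sum_const_zero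
  | succ r ih =>
    obtain ⟨x, hx⟩ : ∃ x, 1 ≤ E x := exists_one_le_of_degree_pos (by omega)
    have hE' : Effective (E - Pi.single x 1) := effective_sub_single_iff.2 ⟨hE, hx⟩
    rw [← sub_add_cancel E (Pi.single x 1), ← sub_sub]
    refine hA _ (fun y hy => ?_) x
    rw [sub_right_comm]
    refine ih (fun E' hE'_eff hE'_supp hE'_deg => ?_) hE'
      (by simp [degree_sub, degree_single, hdeg])
    rw [sub_sub]
    refine h _ ((effective_single y).add hE'_eff) (fun z hz => ?_) ?_
    · have hzy : z ≠ y := fun hzy => hz (hzy ▸ hy)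
      simp [hE'_supp z hz, hzy]
    · rw [degree_add, degree_single, hE'_deg]
      push_cast
      ring

end RankDetermining

section SubdivMap

variable {G : Multigraph} {k : G.E → ℕ}

@[simp] theorem subdivMap_oldVert (D : G.V → ℤ) (y : G.V) :
    G.subdivMap k D (oldVert k y) = D y := rfl

@[simp] theorem subdivMap_newVert (D : G.V → ℤ) (p : Σ e : G.E, Fin (k e)) :
    G.subdivMap k D (newVert k p) = 0 := rfl

theorem subdivMap_comp_oldVert {E : (G.subdivide k).V → ℤ}
    (hE : ∀ x ∉ Set.range (oldVert k), E x = 0) : G.subdivMap k (E ∘ oldVert k) = E := by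
  ext x
  cases x using subdivide_vert_induction with
  | old y => rfl
  | new p => exact (hE _ fun ⟨_, h⟩ => oldVert_ne_newVert h).symm

theorem subdivMap_sub (D E : G.V → ℤ) :
    G.subdivMap k (D - E) = G.subdivMap k D - G.subdivMap k E := by
  ext x
  cases x using subdivide_vert_induction <;> simp

theorem degree_subdivMap (D : G.V → ℤ) : degree (G.subdivMap k D) = degree D :=
  (Fintype.sum_sum_type _).trans (by simp [subdivMap, degree])

theorem effective_subdivMap_iff {D : G.V → ℤ} : Effective (G.subdivMap k D) ↔ Effective D := by
  refine ⟨fun h y => h (oldVert k y), fun h x => ?_⟩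
  cases x using subdivide_vert_induction with
  | old y => exact h y
  | new p => exact le_rfl

theorem winnable_subdivide_sub_iff (hloop : ∀ e, k e ≠ 0 → ¬ G.IsLoop e)
    {D : (G.subdivide k).V → ℤ} {r : ℕ} :
    (∀ E, Effective E → degree E = r → (G.subdivide k).Winnable (D - E)) ↔
      ∀ E : G.V → ℤ, Effective E → degree E = r →
        (G.subdivide k).Winnable (D - G.subdivMap k E) := by
  refine ⟨fun h E hE hdeg => h _ (effective_subdivMap_iff.2 hE) (by rwa [degree_subdivMap]),
    fun h E hE hdeg => ?_⟩
  refine winnable_sub_of_forall_supported (A := Set.range (oldVert k)) (fun D hD x => ?_)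
    (fun E hE hsupp hdeg => ?_) hE hdeg
  · rw [Set.forall_mem_range] at hD
    cases x using subdivide_vert_induction with
    | old y => exact hD y
    | new p =>
      rw [← pathVert_add_one]
      exact winnable_sub_single_pathVert (hloop p.1 (Fin.pos p.2).ne') (hD _) (hD _) (by omega)
  · rw [← subdivMap_comp_oldVert hsupp] at hdeg ⊢
    exact h _ (fun y => hE (oldVert k y)) (by rwa [degree_subdivMap] at hdeg)

end SubdivMap

section Gradients

variable {G : Multigraph} {k : G.E → ℕ}

variable (G) in
/-- Multiplication of functions on the edges by `k + 1` takes the gradient of a function on the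
vertices to the gradient of another one. This expresses, without mention of cycles, that `k` is
constant on each block of `G`. -/
def PreservesGradients (k : G.E → ℕ) : Prop :=
  ∀ f : G.V → ℚ, ∃ g : G.V → ℚ, ∀ e,
    g (G.ends e).1 - g (G.ends e).2 = (k e + 1) * (f (G.ends e).1 - f (G.ends e).2)

theorem PreservesGradients.exists_int (hk : G.PreservesGradients k) (f : G.V → ℤ) :
    ∃ g : G.V → ℤ, ∀ e,
      g (G.ends e).1 - g (G.ends e).2 = (k e + 1) * (f (G.ends e).1 - f (G.ends e).2) := by
  obtain ⟨g, hg⟩ := hk fun y => f y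
  refine ⟨fun y => ⌊g y⌋, fun e => ?_⟩
  have hge : g (G.ends e).1 = g (G.ends e).2 +
      (((k e + 1) * (f (G.ends e).1 - f (G.ends e).2) : ℤ) : ℚ) := by
    push_cast
    linarith [hg e]
  simp only [hge, Int.floor_add_intCast, add_sub_cancel_left]

/-- The space of gradients is finite-dimensional, so the injective map `k + 1` of it is onto. -/
theorem PreservesGradients.exists_div (hk : G.PreservesGradients k) (f : G.V → ℚ) :
    ∃ g : G.V → ℚ, ∀ e,
      (k e + 1) * (g (G.ends e).1 - g (G.ends e).2) = f (G.ends e).1 - f (G.ends e).2 := by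
  let grad : (G.V → ℚ) →ₗ[ℚ] G.E → ℚ :=
    LinearMap.funLeft ℚ ℚ (fun e => (G.ends e).1) - LinearMap.funLeft ℚ ℚ (fun e => (G.ends e).2)
  let stretch : (G.E → ℚ) →ₗ[ℚ] G.E → ℚ := LinearMap.mulLeft ℚ fun e => (k e + 1 : ℚ)
  have hstretch : ∀ s ∈ LinearMap.range grad, stretch s ∈ LinearMap.range grad := by
    rintro _ ⟨f, rfl⟩
    exact (hk f).imp fun g hg => funext hg
  have hinj : Function.Injective stretch := fun s t hst => funext fun e =>
    mul_left_cancel₀ (Nat.cast_add_one_ne_zero (k e)) (congrFun hst e)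
  obtain ⟨_, ⟨g, rfl⟩, hg⟩ :=
    (LinearMap.injOn_iff_surjOn hstretch).1 hinj.injOn ⟨f, rfl⟩
  exact ⟨g, congrFun hg⟩

theorem subdivMap_divOf_eq_divOf {F : (G.subdivide k).V → ℤ} {f : G.V → ℤ}
    (hF : ∀ e, ∀ i ≤ k e + 1, F (pathVert k e i) =
      F (oldVert k (G.ends e).1) - i * (f (G.ends e).1 - f (G.ends e).2)) :
    G.subdivMap k (G.divOf f) = (G.subdivide k).divOf F := by
  ext x
  cases x using subdivide_vert_induction with
  | old y =>
    rw [subdivMap_oldVert, divOf_subdivide_oldVert]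
    refine Finset.sum_congr rfl fun e _ => ?_
    rw [hF e 0 (by omega), hF e 1 (by omega), hF e (k e) (by omega), hF e (k e + 1) le_rfl]
    congr 1 <;> refine if_ctx_congr Iff.rfl (fun h => ?_) fun _ => rfl
    · rw [h]
      push_cast
      ring
    · rw [h]
      push_cast
      ring
  | new p =>
    rw [subdivMap_newVert, divOf_subdivide_newVert, hF p.1 p.2 (by omega),
      hF p.1 (p.2 + 1) (by omega), hF p.1 (p.2 + 2) (by omega)]
    push_cast
    ring

theorem PreservesGradients.subdivMap_mem_Prin (hk : G.PreservesGradients k) {D : G.V → ℤ}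
    (hD : D ∈ G.Prin) : G.subdivMap k D ∈ (G.subdivide k).Prin := by
  obtain ⟨f, rfl⟩ := mem_Prin_iff.1 hD
  obtain ⟨g, hg⟩ := hk.exists_int f
  let F : (G.subdivide k).V → ℤ := Sum.elim g fun p =>
    g (G.ends p.1).1 - (p.2 + 1) * (f (G.ends p.1).1 - f (G.ends p.1).2)
  refine mem_Prin_iff.2 ⟨F, (subdivMap_divOf_eq_divOf fun e i hi => ?_).symm⟩
  rcases pathIndex_cases hi with rfl | ⟨j, rfl⟩ | rfl
  · simp
  · rw [pathVert_add_one]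
    simp [F, newVert, oldVert]
  · rw [pathVert_last]
    push_cast
    exact (sub_sub_cancel (g (G.ends e).1) (g (G.ends e).2)).symm.trans (by rw [hg e]; rfl)

theorem le_floor_sub_floor {R : Type*} [Ring R] [LinearOrder R] [IsStrictOrderedRing R]
    [FloorRing R] {s : ℤ} {a b : R} (hs : s ≤ a - b) : s ≤ ⌊a⌋ - ⌊b⌋ :=
  le_sub_iff_add_le.2 (Int.le_floor.2 (by
    push_cast
    exact (add_le_add hs (Int.floor_le b)).trans_eq (sub_add_cancel a b)))

theorem divOf_oldVert_le_divOf_floor {F : (G.subdivide k).V → ℤ}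
    (hF : ∀ p, 0 ≤ (G.subdivide k).divOf F (newVert k p)) {h : G.V → ℚ}
    (hh : ∀ e, (k e + 1) * (h (G.ends e).1 - h (G.ends e).2) =
      F (oldVert k (G.ends e).1) - F (oldVert k (G.ends e).2)) (y : G.V) :
    (G.subdivide k).divOf F (oldVert k y) ≤ G.divOf (fun z => ⌊h z⌋) y := by
  rw [divOf_subdivide_oldVert]
  refine Finset.sum_le_sum fun e _ => ?_
  obtain ⟨hfirst, hlast⟩ := slopes_le_of_concave (a := fun i => F (pathVert k e i)) (n := k e)
    fun i hi => by linarith [hF ⟨e, i, hi⟩, divOf_subdivide_newVert F ⟨e, i, hi⟩]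
  simp only [pathVert_zero, pathVert_last] at hfirst hlast ⊢
  have hpos : (0 : ℚ) < k e + 1 := by positivity
  have hle_first : (F (oldVert k (G.ends e).1) - F (pathVert k e 1) : ℚ) ≤
      h (G.ends e).1 - h (G.ends e).2 :=
    le_of_mul_le_mul_left (by rw [hh e]; exact_mod_cast hfirst) hpos
  have hle_last : (h (G.ends e).1 - h (G.ends e).2 : ℚ) ≤
      F (pathVert k e (k e)) - F (oldVert k (G.ends e).2) :=
    le_of_mul_le_mul_left (by rw [hh e]; exact_mod_cast hlast) hpos
  gcongr <;> split_ifs with hy <;> first | rfl | subst hy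
  · exact le_floor_sub_floor (by exact_mod_cast hle_first)
  · exact le_floor_sub_floor (by push_cast; linarith)

theorem PreservesGradients.winnable_subdivMap_iff (hk : G.PreservesGradients k) {D : G.V → ℤ} :
    (G.subdivide k).Winnable (G.subdivMap k D) ↔ G.Winnable D := by
  constructor
  · rintro ⟨F, hF⟩
    obtain ⟨h, hh⟩ := hk.exists_div fun y => F (oldVert k y)
    have hconcave (p) : 0 ≤ (G.subdivide k).divOf F (newVert k p) := by
      simpa using hF (newVert k p)
    exact ⟨fun y => ⌊h y⌋, fun y => (hF (oldVert k y)).trans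
      (add_le_add_right (divOf_oldVert_le_divOf_floor hconcave hh y) _)⟩
  · rw [winnable_iff_exists_effective]
    rintro ⟨D', hD', hDD'⟩
    refine (effective_subdivMap_iff.2 hD').winnable_of_sub_mem_Prin ?_
    rw [← subdivMap_sub]
    exact hk.subdivMap_mem_Prin hDD'

theorem Wedge.preservesGradients (W : G.Wedge) (m n : ℕ) :
    G.PreservesGradients fun e => if e ∈ W.E1 then m else n := by
  intro f
  let g (x : G.V) : ℚ := (if x ∈ W.V1 then m + 1 else n + 1) * (f x - f W.v)
  have hg₁ {x : G.V} (hx : x ∈ W.V1) : g x = (m + 1) * (f x - f W.v) := by simp [g, hx]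
  have hg₂ {x : G.V} (hx : x ∈ W.V2) : g x = (n + 1) * (f x - f W.v) := by
    by_cases hx₁ : x ∈ W.V1
    · have hxv : x = W.v := by simpa [W.inter_V] using Finset.mem_inter.2 ⟨hx₁, hx⟩
      simp [g, hxv]
    · simp [g, hx₁]
  refine ⟨g, fun e => ?_⟩
  by_cases he : e ∈ W.E1
  · rw [hg₁ (W.ends1 e he).1, hg₁ (W.ends1 e he).2]
    simp only [if_pos he]
    ring
  · have he₂ : e ∈ W.E2 :=
      (Finset.mem_union.1 (W.cover_E ▸ Finset.mem_univ e)).resolve_left he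
    rw [hg₂ (W.ends2 e he₂).1, hg₂ (W.ends2 e he₂).2]
    simp only [if_neg he]
    ring

end Gradients

end Multigraph

open Multigraph in
theorem wedge_subdivision_rank_general (G : Multigraph) (k : G.E → ℕ)
    (hloop : ∀ e, k e ≠ 0 → ¬ G.IsLoop e) (hk : G.PreservesGradients k) (D : G.V → ℤ) :
    G.rank D = (G.subdivide k).rank (G.subdivMap k D) := by
  unfold rank
  congr 1
  ext r
  simp only [Set.mem_ofPred_eq, ← winnable_iff_exists_effective]
  refine or_congr_right (and_congr_right fun hr => ?_)
  lift r to ℕ using hr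
  rw [winnable_subdivide_sub_iff hloop]
  simp only [← subdivMap_sub, hk.winnable_subdivMap_iff]

open Multigraph in
/-- For a cut-vertex decomposition `G = H₁ ∨ H₂` of a connected
loopless graph and the refinement `G^{(m,n)} = H₁^{(m)} ∨ H₂^{(n)}`,
`r_G(D) = r_{G^{(m,n)}}(σ*_{m,n} D)` for every divisor `D` on `G`. -/
theorem wedge_subdivision_rank (G : Multigraph) (hG : G.Connected) (hL : G.Loopless)
    (W : G.Wedge) (m n : ℕ) (D : G.V → ℤ) :
    G.rank D = (G.subdivide (fun e => if e ∈ W.E1 then m else n)).rank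
      (G.subdivMap (fun e => if e ∈ W.E1 then m else n) D) :=
  wedge_subdivision_rank_general G _ (fun e _ => hL e) (W.preservesGradients m n) D
end
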